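/- arXiv:1009.2460 — 2 statements merged into one kernel-verified Lean document; each statement's English description precedes it below -/
import Mathlib

section
/- Let R be a commutative ring, M a finite free R-module of rank h, and f : M → M an R-linear endomorphism. For every 1 ≤ j ≤ h, the determinant of the induced endomorphism Λ^j f of the j-th exterior power Λ^j M (a free module of rank C(h,j)) equals (det f)^{C(h−1, j−1)}, where C denotes the binomial coefficient. -/
/-- The image of the `n`-th exterior power under the algebra map induced by a linear map. -/
theorem extMap_mem {R : Type*} [CommRing R] {M N : Type*} [AddCommGroup M] [Module R M]
    [AddCommGroup N] [Module R N] (n : ℕ) (f : M →ₗ[R] N) {x : ExteriorAlgebra R M}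
    (hx : x ∈ ⋀[R]^n M) : ExteriorAlgebra.map f x ∈ ⋀[R]^n N := by
  rw [← ExteriorAlgebra.ιMulti_span_fixedDegree] at hx ⊢
  refine Submodule.span_induction ?_ ?_ ?_ ?_ hx
  · rintro x ⟨v, rfl⟩
    rw [ExteriorAlgebra.map_apply_ιMulti]
    exact Submodule.subset_span ⟨f ∘ v, rfl⟩
  · simp
  · intro x y _ _ hx hy
    rw [map_add]
    exact Submodule.add_mem _ hx hy
  · intro r x _ hx
    rw [map_smul]
    exact Submodule.smul_mem _ r hx

/-- The linear map `⋀[R]^n M → ⋀[R]^n N` functorially induced by a linear map `f : M → N`;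
it sends `x₁ ∧ ⋯ ∧ xₙ` to `f x₁ ∧ ⋯ ∧ f xₙ`. -/
noncomputable def extPowMap {R : Type*} [CommRing R] {M N : Type*} [AddCommGroup M] [Module R M]
    [AddCommGroup N] [Module R N] (n : ℕ) (f : M →ₗ[R] N) : ⋀[R]^n M →ₗ[R] ⋀[R]^n N :=
  (ExteriorAlgebra.map f).toLinearMap.restrict fun x hx => extMap_mem n f hx

/-- The wedge product `v 0 ∧ ⋯ ∧ v (n-1)` as an element of the `n`-th exterior power. -/
noncomputable def wedgeProd (R : Type*) [CommRing R] {M : Type*} [AddCommGroup M] [Module R M]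
    (n : ℕ) (v : Fin n → M) : ⋀[R]^n M :=
  ⟨ExteriorAlgebra.ιMulti R n v, ExteriorAlgebra.ιMulti_range R n (Set.mem_range_self v)⟩

/-!
In coordinates, `Λ^k f` is given by the compound matrix of `k × k` minors, so functoriality of
`Λ^k` gives the Cauchy–Binet formula and `A ↦ det (compoundMatrix k A)` is multiplicative. Over a
field with an element `u ≠ 0, 1`, a multiplicative map into a commutative monoid is determined by
its values on diagonal matrices, because every transvection is the commutator of an invertible
diagonal matrix and a transvection. On diagonal matrices of size `h` the formula says that each
index lies in `(h - 1).choose (k - 1)` of the `k`-subsets. The identity thus holds for the generic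
matrix over the fraction field of `ℤ[Xᵢⱼ]`, hence over every commutative ring by specialization.
-/

theorem prod_powersetCard_prod {α N : Type*} [CommMonoid N] (s : Finset α) (f : α → N) {k : ℕ}
    (hk : 1 ≤ k) :
    ∏ t ∈ s.powersetCard k, ∏ i ∈ t, f i = (∏ i ∈ s, f i) ^ (s.card - 1).choose (k - 1) := by
  classical
  have card_containing : ∀ i ∈ s,
      ((s.powersetCard k).filter (i ∈ ·)).card = (s.card - 1).choose (k - 1) := fun i hi => by
    simpa using Finset.card_filter_powersetCard_subset {i} s k (by simpa using hi)
      (by simpa using hk)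
  calc ∏ t ∈ s.powersetCard k, ∏ i ∈ t, f i
      = ∏ i ∈ s, ∏ _t ∈ (s.powersetCard k).filter (i ∈ ·), f i :=
        Finset.prod_comm' fun t i => by
          simp only [Finset.mem_powersetCard, Finset.mem_filter]
          exact ⟨fun ⟨ht, hi⟩ => ⟨⟨ht, hi⟩, ht.1 hi⟩, fun ⟨h, _⟩ => h⟩
    _ = ∏ i ∈ s, f i ^ (s.card - 1).choose (k - 1) :=
        Finset.prod_congr rfl fun i hi => by rw [Finset.prod_const, card_containing i hi]
    _ = (∏ i ∈ s, f i) ^ (s.card - 1).choose (k - 1) := Finset.prod_pow s _ f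

section MultiplicativeMaps

variable {n N : Type*} [Fintype n] [DecidableEq n] [CommMonoid N]

theorem diagonal_update_mul_transvection {R : Type*} [CommRing R] {i j : n} (hij : i ≠ j)
    (u c : R) :
    Matrix.diagonal (Function.update 1 i u) * Matrix.transvection i j c =
      Matrix.transvection i j (u * c) * Matrix.diagonal (Function.update 1 i u) := by
  have hd : Matrix.diagonal (Function.update 1 i u) * Matrix.single i j c =
      Matrix.single i j (u * c) * Matrix.diagonal (Function.update 1 i u) := by
    ext a b
    simp only [Matrix.diagonal_mul, Matrix.mul_diagonal, Matrix.single_apply]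
    split_ifs with h
    · obtain ⟨rfl, rfl⟩ := h
      simp [hij.symm]
    · simp
  simp only [Matrix.transvection, mul_add, add_mul, mul_one, one_mul, hd]

theorem map_transvection_eq_one {R : Type*} [CommRing R] (φ : Matrix n n R →* N) {u : R}
    (hu : IsUnit u) (hu' : IsUnit (u - 1)) {i j : n} (hij : i ≠ j) (c : R) :
    φ (Matrix.transvection i j c) = 1 := by
  obtain ⟨b, rfl⟩ : ∃ b, (u - 1) * b = c := hu'.dvd.imp fun _ h => h.symm
  have hD : IsUnit (φ (Matrix.diagonal (Function.update 1 i u))) := by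
    refine IsUnit.map φ (Matrix.isUnit_diagonal.mpr (Pi.isUnit_iff.mpr fun a => ?_))
    rcases eq_or_ne a i with rfl | ha <;> simp [*]
  have hT : IsUnit (φ (Matrix.transvection i j b)) := by
    refine IsUnit.map φ ((Matrix.isUnit_iff_isUnit_det _).mpr ?_)
    simp [Matrix.det_transvection_of_ne i j hij]
  have hsplit : Matrix.transvection i j (u * b) =
      Matrix.transvection i j ((u - 1) * b) * Matrix.transvection i j b := by
    rw [Matrix.transvection_mul_transvection_same i j hij]
    ring_nf
  have hcomm := congrArg φ (diagonal_update_mul_transvection hij u b)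
  rw [hsplit, map_mul, map_mul, map_mul, mul_comm (φ (Matrix.diagonal _)), mul_assoc] at hcomm
  exact (hT.mul hD).mul_eq_right.mp hcomm.symm

theorem matrix_monoidHom_ext_diagonal {K : Type*} [Field K] {u : K} (hu₀ : u ≠ 0) (hu₁ : u ≠ 1)
    {φ ψ : Matrix n n K →* N} (h : ∀ d, φ (Matrix.diagonal d) = ψ (Matrix.diagonal d)) :
    φ = ψ := by
  ext A
  induction A using Matrix.diagonal_transvection_induction with
  | hdiag d _ => exact h d
  | htransvec t =>
    have map_eq_one (χ : Matrix n n K →* N) : χ t.toMatrix = 1 :=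
      map_transvection_eq_one χ hu₀.isUnit (sub_ne_zero.mpr hu₁).isUnit t.hij t.c
    rw [map_eq_one, map_eq_one]
  | hmul A B hA hB => rw [map_mul, map_mul, hA, hB]

end MultiplicativeMaps

section CompoundMatrix

open Set.powersetCard

variable {l m n R S : Type*} [LinearOrder l] [LinearOrder m] [LinearOrder n]
  [CommRing R] [CommRing S]

/-- The `k`-th compound matrix of `A`, whose entries are the `k × k` minors of `A`. Rows and columns
are indexed by the `k`-element subsets, each enumerated in increasing order. -/
noncomputable def compoundMatrix (k : ℕ) (A : Matrix m n R) :
    Matrix (Set.powersetCard m k) (Set.powersetCard n k) R :=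
  Matrix.of fun s t => (A.submatrix (ofFinEmbEquiv.symm s) (ofFinEmbEquiv.symm t)).det

theorem compoundMatrix_apply (k : ℕ) (A : Matrix m n R) (s : Set.powersetCard m k)
    (t : Set.powersetCard n k) :
    compoundMatrix k A s t =
      (A.submatrix (ofFinEmbEquiv.symm s) (ofFinEmbEquiv.symm t)).det :=
  rfl

theorem compoundMatrix_map (φ : R →+* S) (k : ℕ) (A : Matrix m n R) :
    compoundMatrix k (A.map φ) = (compoundMatrix k A).map φ := by
  ext s t
  simp only [compoundMatrix_apply, Matrix.map_apply, RingHom.map_det, RingHom.mapMatrix_apply,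
    Matrix.submatrix_map]

theorem toMatrix_exteriorPower_map [Finite m] [Fintype n] {M N : Type*} [AddCommGroup M]
    [Module R M] [AddCommGroup N] [Module R N] (b : Module.Basis n R M) (b' : Module.Basis m R N)
    (k : ℕ) (f : M →ₗ[R] N) :
    LinearMap.toMatrix (b.exteriorPower k) (b'.exteriorPower k) (exteriorPower.map k f) =
      compoundMatrix k (LinearMap.toMatrix b b' f) := by
  ext s t
  rw [LinearMap.toMatrix_apply, exteriorPower.basis_repr_apply, exteriorPower.basis_apply,
    exteriorPower.map_apply_ιMulti_family, exteriorPower.ιMulti_family,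
    exteriorPower.ιMultiDual_apply_ιMulti, compoundMatrix_apply, ← Matrix.det_transpose]
  congr 1
  ext i j
  simp [LinearMap.toMatrix_apply]

theorem compoundMatrix_mul [Finite l] [Fintype m] [Finite n] (k : ℕ) (A : Matrix l m R)
    (B : Matrix m n R) :
    compoundMatrix k (A * B) = compoundMatrix k A * compoundMatrix k B := by
  cases nonempty_fintype n
  let bl := Pi.basisFun R l
  let bm := Pi.basisFun R m
  let bn := Pi.basisFun R n
  have hA := toMatrix_exteriorPower_map bm bl k (Matrix.toLin bm bl A)
  have hB := toMatrix_exteriorPower_map bn bm k (Matrix.toLin bn bm B)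
  have hAB := toMatrix_exteriorPower_map bn bl k (Matrix.toLin bn bl (A * B))
  rw [LinearMap.toMatrix_toLin] at hA hB hAB
  rw [← hA, ← hB, ← hAB, ← LinearMap.toMatrix_comp, ← exteriorPower.map_comp, ← Matrix.toLin_mul]

theorem compoundMatrix_diagonal (k : ℕ) (d : n → R) :
    compoundMatrix k (Matrix.diagonal d) = Matrix.diagonal fun s => ∏ i ∈ s.1, d i := by
  ext s t
  rw [compoundMatrix_apply]
  rcases eq_or_ne s t with rfl | hst
  · rw [Matrix.submatrix_diagonal _ _ (ofFinEmbEquiv.symm s).injective, Matrix.det_diagonal,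
      Matrix.diagonal_apply_eq, ofFinEmbEquiv_symm_apply]
    conv_rhs => rw [← Finset.map_orderEmbOfFin_univ s.1 s.2, Finset.prod_map]
    rfl
  · obtain ⟨i, his, hit⟩ := (exists_mem_notMem_iff_ne s t).mp hst
    obtain ⟨a, rfl⟩ := (mem_range_ofFinEmbEquiv_symm_iff_mem s i).mpr his
    rw [Matrix.diagonal_apply_ne _ hst]
    refine Matrix.det_eq_zero_of_row_eq_zero a fun b => Matrix.diagonal_apply_ne _ fun hab => hit ?_
    exact (mem_range_ofFinEmbEquiv_symm_iff_mem t _).mp ⟨b, hab.symm⟩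

variable [Fintype n]

/-- The determinant of the `k`-th compound matrix, as a multiplicative function of the matrix. -/
noncomputable def detCompoundHom (n R : Type*) [LinearOrder n] [Fintype n] [CommRing R] (k : ℕ) :
    Matrix n n R →* R where
  toFun A := (compoundMatrix k A).det
  map_one' := by
    rw [← Matrix.diagonal_one, compoundMatrix_diagonal]
    simp
  map_mul' A B := by rw [compoundMatrix_mul, Matrix.det_mul]

theorem det_compoundMatrix_map (φ : R →+* S) (k : ℕ) (A : Matrix n n R) :
    (compoundMatrix k (A.map φ)).det = φ (compoundMatrix k A).det := by
  rw [compoundMatrix_map, RingHom.map_det, RingHom.mapMatrix_apply]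

theorem det_compoundMatrix_diagonal {k : ℕ} (hk : 1 ≤ k) (d : n → R) :
    (compoundMatrix k (Matrix.diagonal d)).det =
      (Matrix.diagonal d).det ^ (Fintype.card n - 1).choose (k - 1) := by
  rw [compoundMatrix_diagonal, Matrix.det_diagonal, Matrix.det_diagonal, ← Finset.card_univ,
    ← prod_powersetCard_prod _ d hk]
  exact (Finset.prod_subtype _ (by simp [mem_iff]) fun s => ∏ i ∈ s, d i).symm

theorem det_compoundMatrix_of_field {K : Type*} [Field K] {u : K} (hu₀ : u ≠ 0) (hu₁ : u ≠ 1)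
    {k : ℕ} (hk : 1 ≤ k) (A : Matrix n n K) :
    (compoundMatrix k A).det = A.det ^ (Fintype.card n - 1).choose (k - 1) := by
  have h : detCompoundHom n K k =
      (powMonoidHom ((Fintype.card n - 1).choose (k - 1))).comp Matrix.detMonoidHom :=
    matrix_monoidHom_ext_diagonal hu₀ hu₁ (det_compoundMatrix_diagonal hk)
  exact DFunLike.congr_fun h A

theorem det_compoundMatrix {k : ℕ} (hk : 1 ≤ k) (A : Matrix n n R) :
    (compoundMatrix k A).det = A.det ^ (Fintype.card n - 1).choose (k - 1) := by
  let P := MvPolynomial (n × n) ℤ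
  let X : Matrix n n P := Matrix.mvPolynomialX n n ℤ
  have hX : (compoundMatrix k X).det = X.det ^ (Fintype.card n - 1).choose (k - 1) := by
    apply IsFractionRing.injective P (FractionRing P)
    rw [← det_compoundMatrix_map, det_compoundMatrix_of_field two_ne_zero (OfNat.ofNat_ne_one 2) hk,
      map_pow, RingHom.map_det, RingHom.mapMatrix_apply]
  let φ : P →+* R := MvPolynomial.eval₂Hom (Int.castRingHom R) fun p => A p.1 p.2
  have hA : X.map φ = A := Matrix.mvPolynomialX_map_eval₂ _ A
  rw [← hA, det_compoundMatrix_map, hX, map_pow, RingHom.map_det, RingHom.mapMatrix_apply]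

end CompoundMatrix

theorem extPowMap_eq_exteriorPower_map {R M N : Type*} [CommRing R] [AddCommGroup M] [Module R M]
    [AddCommGroup N] [Module R N] (k : ℕ) (f : M →ₗ[R] N) :
    extPowMap k f = exteriorPower.map k f := by
  ext v
  exact (ExteriorAlgebra.map_apply_ιMulti f v).trans
    (congrArg Subtype.val (exteriorPower.map_apply_ιMulti f v)).symm

/-- Let `M` be a finite free module of rank `h` over a commutative ring `R`
and `f : M → M` linear. For `1 ≤ j ≤ h`, `det (Λ^j f) = (det f)^(C(h−1, j−1))`. -/
theorem det_exteriorPower_map (R : Type*) [CommRing R] (M : Type*) [AddCommGroup M]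
    [Module R M] [Module.Free R M] [Module.Finite R M] (f : M →ₗ[R] M) (j : ℕ)
    (hj1 : 1 ≤ j) (hj2 : j ≤ Module.finrank R M) :
    LinearMap.det (extPowMap j f) =
      LinearMap.det f ^ Nat.choose (Module.finrank R M - 1) (j - 1) := by
  nontriviality R
  let b := Module.finBasis R M
  rw [extPowMap_eq_exteriorPower_map, ← LinearMap.det_toMatrix (b.exteriorPower j),
    toMatrix_exteriorPower_map, det_compoundMatrix hj1, LinearMap.det_toMatrix, Fintype.card_fin]
end

section
/- Let R be a commutative ring and 0 → M_1 → M_2 → M_3 → 0 a split short exact sequence of R-modules. Let n_1, n_3 ≥ 0 and set n_2 = n_1 + n_3. If Λ^{n_1+1} M_1 = 0 and Λ^{n_3+1} M_3 = 0, then there is a natural isomorphism Λ^{n_1} M_1 ⊗_R Λ^{n_3} M_3 ≅ Λ^{n_2} M_2. -/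
/-!
A splitting identifies the middle module with a product `M × N`. The multiplication `a ⊗ b ↦ a ∧ b`
identifies the graded tensor product of `Λ M` and `Λ N` with `Λ (M × N)`, and graded pieces are
direct summands, so `Λ^m M ⊗ Λ^n N` embeds into `Λ (M × N)`.

To find the image, let `A` and `B` be the copies of `M` and `N` in degree one. They commute in the
semiring of submodules of `Λ (M × N)`, whose addition is idempotent, so the binomial theorem reads
`Λ^(m+n) (M × N) = (A + B)^(m+n) = ∑ A^i B^j` over `i + j = m + n`. If `A^(m+1)` and `B^(n+1)`
vanish, only `A^m B^n` survives, and this is the image of `Λ^m M ⊗ Λ^n N`.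
-/

open TensorProduct LinearMap

theorem add_pow_add_eq_choose_nsmul_mul {S : Type*} [Semiring S] {a b : S} {m n : ℕ}
    (hab : Commute a b) (ha : a ^ (m + 1) = 0) (hb : b ^ (n + 1) = 0) :
    (a + b) ^ (m + n) = (m + n).choose m • (a ^ m * b ^ n) := by
  rw [hab.add_pow', Finset.sum_eq_single (m, n) _ (by simp)]
  rintro ⟨i, j⟩ hij hne
  rw [Finset.HasAntidiagonal.mem_antidiagonal] at hij
  rcases lt_or_ge m i with hi | hi
  · rw [pow_eq_zero_of_le hi ha, zero_mul, smul_zero]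
  · have hj : n + 1 ≤ j := by grind
    rw [pow_eq_zero_of_le hj hb, mul_zero, smul_zero]

theorem range_mul'_comp_map {R S M N : Type*} [CommSemiring R] [Semiring S] [Algebra R S]
    [AddCommMonoid M] [Module R M] [AddCommMonoid N] [Module R N]
    (f : M →ₗ[R] S) (g : N →ₗ[R] S) :
    range (mul' R S ∘ₗ TensorProduct.map f g) = range f * range g := by
  rw [← Submodule.mulMap_range, Submodule.mulMap_eq_mul'_comp_mapIncl, range_comp, range_comp,
    TensorProduct.range_map, TensorProduct.mapIncl, TensorProduct.range_map]
  simp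

theorem mapIncl_injective_of_decomposition {R ι κ M N : Type*} [DecidableEq ι] [DecidableEq κ]
    [CommSemiring R] [AddCommMonoid M] [Module R M] [AddCommMonoid N] [Module R N]
    (ℳ : ι → Submodule R M) [DirectSum.Decomposition ℳ]
    (𝒩 : κ → Submodule R N) [DirectSum.Decomposition 𝒩] (i : ι) (j : κ) :
    Function.Injective (TensorProduct.mapIncl (ℳ i) (𝒩 j)) := by
  rw [TensorProduct.mapIncl, ← lTensor_comp_rTensor]
  exact ((lTensor_inj_iff_rTensor_inj _ _).2 (DirectSum.subtype_rTensor_injective 𝒩 M j)).comp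
    (DirectSum.subtype_rTensor_injective ℳ (𝒩 j) i)

section ExteriorAlgebra

variable {R M N P : Type*} [CommRing R] [AddCommGroup M] [Module R M] [AddCommGroup N] [Module R N]
  [AddCommGroup P] [Module R P]

theorem commute_map_ι_map_ι (A B : Submodule R M) :
    Commute (A.map (ExteriorAlgebra.ι R)) (B.map (ExteriorAlgebra.ι R)) := by
  have mul_le_mul_swap (A B : Submodule R M) :
      A.map (ExteriorAlgebra.ι R) * B.map (ExteriorAlgebra.ι R) ≤
        B.map (ExteriorAlgebra.ι R) * A.map (ExteriorAlgebra.ι R) := by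
    rw [Submodule.mul_le]
    rintro _ ⟨x, hx, rfl⟩ _ ⟨y, hy, rfl⟩
    rw [eq_neg_of_add_eq_zero_left (ExteriorAlgebra.ι_add_mul_swap x y)]
    exact neg_mem (Submodule.mul_mem_mul (Submodule.mem_map_of_mem hy)
      (Submodule.mem_map_of_mem hx))
  exact le_antisymm (mul_le_mul_swap A B) (mul_le_mul_swap B A)

theorem map_exteriorPower (f : M →ₗ[R] P) (n : ℕ) :
    (⋀[R]^n M).map (ExteriorAlgebra.map f).toLinearMap =
      (range f).map (ExteriorAlgebra.ι R) ^ n := by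
  rw [ExteriorAlgebra.exteriorPower, Submodule.map_pow, ExteriorAlgebra.ι_range_map_map]

theorem exteriorPower_add_eq_map_mul_map {f : M →ₗ[R] P} {g : N →ₗ[R] P}
    (hfg : range f ⊔ range g = ⊤) {m n : ℕ} (hM : ⋀[R]^(m + 1) M = ⊥) (hN : ⋀[R]^(n + 1) N = ⊥) :
    ⋀[R]^(m + n) P = (⋀[R]^m M).map (ExteriorAlgebra.map f).toLinearMap *
      (⋀[R]^n N).map (ExteriorAlgebra.map g).toLinearMap := by
  let A := (range f).map (ExteriorAlgebra.ι R)
  let B := (range g).map (ExteriorAlgebra.ι R)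
  have hA : A ^ (m + 1) = 0 := by
    rw [← map_exteriorPower, hM, Submodule.map_bot, Submodule.zero_eq_bot]
  have hB : B ^ (n + 1) = 0 := by
    rw [← map_exteriorPower, hN, Submodule.map_bot, Submodule.zero_eq_bot]
  have hAB : range (ExteriorAlgebra.ι R (M := P)) = A + B := by
    rw [Submodule.add_eq_sup, ← Submodule.map_sup, hfg, Submodule.map_top]
  rw [map_exteriorPower, map_exteriorPower]
  calc ⋀[R]^(m + n) P = (A + B) ^ (m + n) := by rw [ExteriorAlgebra.exteriorPower, hAB]
    _ = (m + n).choose m • (A ^ m * B ^ n) :=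
      add_pow_add_eq_choose_nsmul_mul (commute_map_ι_map_ι _ _) hA hB
    _ = A ^ m * B ^ n := nsmul_eq_self (Nat.choose_pos (Nat.le_add_right m n)).ne' _

/-- The linear map `Λ M ⊗ Λ N → Λ P`, `a ⊗ b ↦ Λf a ∧ Λg b`, induced by `f : M → P` and
`g : N → P`. -/
noncomputable def exteriorMulMap (f : M →ₗ[R] P) (g : N →ₗ[R] P) :
    ExteriorAlgebra R M ⊗[R] ExteriorAlgebra R N →ₗ[R] ExteriorAlgebra R P :=
  mul' R _ ∘ₗ TensorProduct.map (ExteriorAlgebra.map f).toLinearMap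
    (ExteriorAlgebra.map g).toLinearMap

theorem cliffordMap_comp_exteriorMap {Q : QuadraticForm R N} (φ : (0 : QuadraticForm R P) →qᵢ Q)
    (ψ : (0 : QuadraticForm R M) →qᵢ Q) {f : M →ₗ[R] P}
    (h : φ.toLinearMap ∘ₗ f = ψ.toLinearMap) :
    (CliffordAlgebra.map φ).comp (ExteriorAlgebra.map f) = CliffordAlgebra.map ψ := by
  apply ExteriorAlgebra.hom_ext
  ext x
  have hx : φ (f x) = ψ x := congr($h x)
  simp [hx]

theorem exteriorMulMap_injective {f : M →ₗ[R] P} {g : N →ₗ[R] P} {r : P →ₗ[R] M × N}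
    (hr : r ∘ₗ f.coprod g = LinearMap.id) : Function.Injective (exteriorMulMap f g) := by
  -- `CliffordAlgebra.toProd` lands in the algebra of `0.prod 0`, which is `0` only propositionally.
  let φ : (0 : QuadraticForm R P) →qᵢ (0 : QuadraticForm R M).prod (0 : QuadraticForm R N) :=
    { r with map_app' := by simp }
  have hrf : r ∘ₗ f = inl R M N := by simpa [comp_assoc] using congr($hr ∘ₗ inl R M N)
  have hrg : r ∘ₗ g = inr R M N := by simpa [comp_assoc] using congr($hr ∘ₗ inr R M N)
  have hmul : (CliffordAlgebra.map φ).toLinearMap ∘ₗ exteriorMulMap f g =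
      (CliffordAlgebra.toProd 0 0).toLinearMap ∘ₗ (GradedTensorProduct.of R _ _).toLinearMap := by
    refine TensorProduct.ext' fun a b ↦ ?_
    calc CliffordAlgebra.map φ (ExteriorAlgebra.map f a * ExteriorAlgebra.map g b)
        = CliffordAlgebra.map (.inl 0 0) a * CliffordAlgebra.map (.inr 0 0) b := by
          rw [map_mul, ← cliffordMap_comp_exteriorMap φ (.inl 0 0) hrf,
            ← cliffordMap_comp_exteriorMap φ (.inr 0 0) hrg, AlgHom.comp_apply, AlgHom.comp_apply]
      _ = CliffordAlgebra.toProd 0 0 (GradedTensorProduct.of R _ _ (a ⊗ₜ b)) := by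
          rw [CliffordAlgebra.toProd, GradedTensorProduct.lift_tmul]
  have hinj : Function.Injective ((CliffordAlgebra.map φ).toLinearMap ∘ₗ exteriorMulMap f g) := by
    rw [hmul]
    exact (CliffordAlgebra.prodEquiv 0 0).symm.injective.comp
      (GradedTensorProduct.of R _ _).injective
  exact .of_comp (f := CliffordAlgebra.map φ) hinj

theorem range_exteriorMulMap_comp_mapIncl (f : M →ₗ[R] P) (g : N →ₗ[R] P) (m n : ℕ) :
    range (exteriorMulMap f g ∘ₗ TensorProduct.mapIncl (⋀[R]^m M) (⋀[R]^n N)) =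
      (⋀[R]^m M).map (ExteriorAlgebra.map f).toLinearMap *
        (⋀[R]^n N).map (ExteriorAlgebra.map g).toLinearMap := by
  rw [exteriorMulMap, comp_assoc, TensorProduct.mapIncl, ← TensorProduct.map_comp,
    range_mul'_comp_map, range_comp, range_comp, Submodule.range_subtype, Submodule.range_subtype]

/-- The isomorphism `Λ^m M ⊗ Λ^n N ≃ Λ^(m+n) P`, `a ⊗ b ↦ Λf a ∧ Λg b`, when `f : M → P` and
`g : N → P` exhibit `P` as the direct sum of `M` and `N`, and `m`, `n` are top degrees for `M`
and `N`. -/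
noncomputable def exteriorPowerTensorEquiv (f : M →ₗ[R] P) (g : N →ₗ[R] P)
    (hfg : Function.Bijective (f.coprod g)) {m n : ℕ}
    (hM : ⋀[R]^(m + 1) M = ⊥) (hN : ⋀[R]^(n + 1) N = ⊥) :
    (⋀[R]^m M) ⊗[R] (⋀[R]^n N) ≃ₗ[R] ⋀[R]^(m + n) P :=
  have hinj : Function.Injective
      (exteriorMulMap f g ∘ₗ TensorProduct.mapIncl (⋀[R]^m M) (⋀[R]^n N)) :=
    (exteriorMulMap_injective (LinearEquiv.ofBijective _ hfg).symm_comp).comp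
      (mapIncl_injective_of_decomposition (fun i ↦ ⋀[R]^i M) (fun j ↦ ⋀[R]^j N) m n)
  have hsup : range f ⊔ range g = ⊤ := by rw [← range_coprod, range_eq_top.2 hfg.surjective]
  LinearEquiv.ofInjective _ hinj ≪≫ₗ LinearEquiv.ofEq _ _
    ((range_exteriorMulMap_comp_mapIncl f g m n).trans
      (exteriorPower_add_eq_map_mul_map hsup hM hN).symm)

end ExteriorAlgebra

open TensorProduct in
/-- Let `0 → M₁ → M₂ → M₃ → 0` be a split short exact sequence of
`R`-modules, `n₂ = n₁ + n₃`. If `Λ^{n₁+1} M₁ = 0` and `Λ^{n₃+1} M₃ = 0`, then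
`Λ^{n₁} M₁ ⊗ Λ^{n₃} M₃ ≅ Λ^{n₂} M₂`. -/
theorem exteriorPower_split_ses (R : Type*) [CommRing R] (M₁ M₂ M₃ : Type*)
    [AddCommGroup M₁] [Module R M₁] [AddCommGroup M₂] [Module R M₂]
    [AddCommGroup M₃] [Module R M₃]
    (ι : M₁ →ₗ[R] M₂) (π : M₂ →ₗ[R] M₃) (hι : Function.Injective ι)
    (hπ : Function.Surjective π) (hexact : LinearMap.range ι = LinearMap.ker π)
    (s : M₃ →ₗ[R] M₂) (hs : π ∘ₗ s = LinearMap.id)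
    (n₁ n₃ : ℕ) (h₁ : Subsingleton (⋀[R]^(n₁+1) M₁)) (h₃ : Subsingleton (⋀[R]^(n₃+1) M₃)) :
    Nonempty (((⋀[R]^n₁ M₁) ⊗[R] (⋀[R]^n₃ M₃)) ≃ₗ[R] ⋀[R]^(n₁+n₃) M₂) := by
  have hbij : Function.Bijective (ι.coprod s) :=
    ((LinearMap.exact_iff.2 hexact.symm).splitSurjectiveEquiv hι ⟨s, hs⟩).1.symm.bijective
  exact ⟨exteriorPowerTensorEquiv ι s hbij (Submodule.subsingleton_iff_eq_bot.1 h₁)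
    (Submodule.subsingleton_iff_eq_bot.1 h₃)⟩
end
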